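/- (Noether's theorem, second order.) Let K : ℝⁿ × ℝⁿ × ℝⁿ → ℝ be a second-order Finsler–Kawaguchi function that is continuous and C^∞ on the open set where y ≠ 0. Let u : ℝⁿ → ℝⁿ be C² and suppose K is infinitesimally invariant under the second-order lift of u: for every (x, y, z) with y ≠ 0, D_xK(x, y, z)(u(x)) + D_yK(x, y, z)(Du(x)(y)) + D_zK(x, y, z)(D²u(x)(y, y) + Du(x)(z)) = 0, where Du(x) is the derivative of u and D²u(x) its second derivative regarded as a symmetric bilinear map ℝⁿ × ℝⁿ → ℝⁿ. Then for every C^∞ curve σ with σ′ ≠ 0 on [t₁, t₂] that satisfies the second-order Euler–Lagrange equations of K on [t₁, t₂], the Noether current J(t) := D_yK(σ²(t))(u(σ(t))) + 2·D_zK(σ²(t))(Du(σ(t))(σ′(t))) − d/dt [D_zK(σ²(t))(u(σ(t)))] is constant on [t₁, t₂]. -/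

import Mathlib

/-- The second-order Euler–Lagrange covector of a second-order Finsler–Kawaguchi function `K`
along a curve `σ`, evaluated at time `t` on the test vector `h`. -/
noncomputable def eulerLagrange₂ (n : ℕ)
    (K : EuclideanSpace ℝ (Fin n) × EuclideanSpace ℝ (Fin n) × EuclideanSpace ℝ (Fin n) → ℝ)
    (σ : ℝ → EuclideanSpace ℝ (Fin n)) (t : ℝ) (h : EuclideanSpace ℝ (Fin n)) : ℝ :=
  (fderiv ℝ (fun x => fderiv ℝ (fun y => K (x, y, deriv (deriv σ) t)) (deriv σ t)) (σ t)) h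
      (deriv σ t)
    + 2 * ((fderiv ℝ (fun x => fderiv ℝ (fun z => K (x, deriv σ t, z)) (deriv (deriv σ) t))
        (σ t)) h (deriv (deriv σ) t))
    - deriv (fun s => fderiv ℝ (fun y => K (σ s, y, deriv (deriv σ) s)) (deriv σ s) h) t
    + deriv (deriv (fun s => fderiv ℝ (fun z => K (σ s, deriv σ s, z)) (deriv (deriv σ) s) h)) t

section helpers
variable {E : Type*} [NormedAddCommGroup E] [NormedSpace ℝ E]

theorem nso_open : IsOpen {p : E × E × E | p.2.1 ≠ 0} :=
  isOpen_ne_fun (by fun_prop) (by fun_prop)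

theorem nso_diff {K : E × E × E → ℝ}
    (hK : ContDiffOn ℝ (⊤ : ℕ∞) K {p : E × E × E | p.2.1 ≠ 0}) {x y z : E} (hy : y ≠ 0) :
    ContDiffAt ℝ (⊤ : ℕ∞) K (x, y, z) :=
  hK.contDiffAt (nso_open.mem_nhds hy)

theorem nso_dd {K : E × E × E → ℝ}
    (hK : ContDiffOn ℝ (⊤ : ℕ∞) K {p : E × E × E | p.2.1 ≠ 0}) {x y z : E} (hy : y ≠ 0) :
    DifferentiableAt ℝ K (x, y, z) :=
  (nso_diff hK hy).differentiableAt (by simp)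

theorem nso_d {K : E × E × E → ℝ}
    (hK : ContDiffOn ℝ (⊤ : ℕ∞) K {p : E × E × E | p.2.1 ≠ 0}) {x y z : E} (hy : y ≠ 0) :
    ContDiffAt ℝ (⊤ : ℕ∞) (fderiv ℝ K) (x, y, z) :=
  (nso_diff hK hy).fderiv_right (by simp)

theorem nso_y {K : E × E × E → ℝ}
    (hK : ContDiffOn ℝ (⊤ : ℕ∞) K {p : E × E × E | p.2.1 ≠ 0}) {x y z : E} (hy : y ≠ 0) :
    fderiv ℝ (fun y' => K (x, y', z)) y = (fderiv ℝ K (x, y, z)).comp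
      ((0 : E →L[ℝ] E).prod ((ContinuousLinearMap.id ℝ E).prod (0 : E →L[ℝ] E))) := by
  have h := (nso_dd hK (x := x) (z := z) hy).hasFDerivAt
  have h2 : HasFDerivAt (fun y' : E => (x, y', z))
    ((0 : E →L[ℝ] E).prod ((ContinuousLinearMap.id ℝ E).prod (0 : E →L[ℝ] E))) y :=
    (hasFDerivAt_const x y).prodMk ((hasFDerivAt_id y).prodMk (hasFDerivAt_const z y))
  exact (HasFDerivAt.comp y h h2).fderiv

theorem nso_z {K : E × E × E → ℝ}
    (hK : ContDiffOn ℝ (⊤ : ℕ∞) K {p : E × E × E | p.2.1 ≠ 0}) {x y z : E} (hy : y ≠ 0) :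
    fderiv ℝ (fun z' => K (x, y, z')) z = (fderiv ℝ K (x, y, z)).comp
      ((0 : E →L[ℝ] E).prod ((0 : E →L[ℝ] E).prod (ContinuousLinearMap.id ℝ E))) := by
  have h := (nso_dd hK (x := x) (z := z) hy).hasFDerivAt
  have h2 : HasFDerivAt (fun z' : E => (x, y, z'))
    ((0 : E →L[ℝ] E).prod ((0 : E →L[ℝ] E).prod (ContinuousLinearMap.id ℝ E))) z :=
    (hasFDerivAt_const x z).prodMk ((hasFDerivAt_const y z).prodMk (hasFDerivAt_id z))
  exact (HasFDerivAt.comp z h h2).fderiv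

theorem nso_euler {K : E × E × E → ℝ}
    (hhom : ∀ (x y z : E) (l ρ : ℝ), 0 < l →
      K (x, l • y, (l ^ 2) • z + ρ • y) = l * K (x, y, z))
    (hK : ContDiffOn ℝ (⊤ : ℕ∞) K {p : E × E × E | p.2.1 ≠ 0}) {x y z : E} (hy : y ≠ 0) :
    K (x, y, z) = fderiv ℝ (fun y' => K (x, y', z)) y y
      + 2 * fderiv ℝ (fun z' => K (x, y, z')) z z := by
  rw [nso_y hK hy, nso_z hK hy]
  have h := (nso_dd hK (x := x) (z := z) hy).hasFDerivAt
  have h2 : HasDerivAt (fun l : ℝ => (x, l • y, (l ^ 2) • z)) ((0 : E), y, (2 : ℝ) • z) 1 := by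
    have a : HasDerivAt (fun l : ℝ => l • y) y 1 := by
      simpa using (hasDerivAt_id (1 : ℝ)).smul_const y
    have b : HasDerivAt (fun l : ℝ => (l ^ 2) • z) ((2 : ℝ) • z) 1 := by
      simpa using (hasDerivAt_pow 2 (1 : ℝ)).smul_const z
    exact (hasDerivAt_const (1 : ℝ) x).prodMk (a.prodMk b)
  have h' : HasFDerivAt K (fderiv ℝ K (x, y, z))
      ((fun l : ℝ => (x, l • y, (l ^ 2) • z)) 1) := by simpa using h
  have h3 := h'.comp_hasDerivAt (1 : ℝ) h2
  have h4 : HasDerivAt (fun l : ℝ => l * K (x, y, z)) (K (x, y, z)) 1 := by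
    simpa using (hasDerivAt_id (1 : ℝ)).mul_const (K (x, y, z))
  have h5 : (fun l : ℝ => l * K (x, y, z)) =ᶠ[nhds 1]
      (K ∘ fun l : ℝ => (x, l • y, (l ^ 2) • z)) := by
    filter_upwards [lt_mem_nhds (zero_lt_one (α := ℝ))] with l hl
    simpa using (hhom x y z l 0 hl).symm
  have h6 := h4.unique (h3.congr_of_eventuallyEq h5)
  rw [h6]
  have : ((0 : E), y, (2 : ℝ) • z) = (0, y, 0) + (2 : ℝ) • ((0 : E), (0 : E), z) := by simp
  rw [this, map_add, map_smul]
  simp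

theorem nso_dx {K : E × E × E → ℝ}
    (hhom : ∀ (x y z : E) (l ρ : ℝ), 0 < l →
      K (x, l • y, (l ^ 2) • z + ρ • y) = l * K (x, y, z))
    (hK : ContDiffOn ℝ (⊤ : ℕ∞) K {p : E × E × E | p.2.1 ≠ 0}) {x y z : E} (hy : y ≠ 0) (h : E) :
    fderiv ℝ (fun x' => K (x', y, z)) x h =
      fderiv ℝ (fun x' => fderiv ℝ (fun y' => K (x', y', z)) y) x h y
      + 2 * fderiv ℝ (fun x' => fderiv ℝ (fun z' => K (x', y, z')) z) x h z := by
  have e : (fun x' => K (x', y, z)) = fun x' => fderiv ℝ (fun y' => K (x', y', z)) y y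
      + 2 * fderiv ℝ (fun z' => K (x', y, z')) z z := by
    funext x'; exact nso_euler hhom hK hy
  have hd : DifferentiableAt ℝ (fun x' => fderiv ℝ K (x', y, z)) x :=
    DifferentiableAt.comp x (g := fderiv ℝ K) (f := fun x' => (x', y, z))
      ((nso_d hK hy).differentiableAt (by simp)) (by fun_prop)
  have d1 : DifferentiableAt ℝ (fun x' => fderiv ℝ (fun y' => K (x', y', z)) y) x := by
    simp_rw [fun x' => nso_y hK (x := x') (z := z) hy]
    exact hd.clm_comp (differentiableAt_const _)
  have d2 : DifferentiableAt ℝ (fun x' => fderiv ℝ (fun z' => K (x', y, z')) z) x := by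
    simp_rw [fun x' => nso_z hK (x := x') (z := z) hy]
    exact hd.clm_comp (differentiableAt_const _)
  have f1 := d1.hasFDerivAt.clm_apply (hasFDerivAt_const y x)
  have f2 := d2.hasFDerivAt.clm_apply (hasFDerivAt_const z x)
  rw [e, (f1.fun_add (f2.const_mul 2)).fderiv]
  simp

end helpers

/-- **Noether's theorem (second-order mechanics).**  If `K` is infinitesimally invariant under
the second-order lift of a vector field `u`, then along every second-order extremal the Noether
current
`J(t) = D_yK(σ²(t))(u(σ t)) + 2·D_zK(σ²(t))(Du(σ t)(σ′ t)) − d/dt [D_zK(σ²(t))(u(σ t))]`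
is constant. -/
theorem noether_second_order
    (n : ℕ)
    (K : EuclideanSpace ℝ (Fin n) × EuclideanSpace ℝ (Fin n) × EuclideanSpace ℝ (Fin n) → ℝ)
    (hhom : ∀ (x y z : EuclideanSpace ℝ (Fin n)) (l ρ : ℝ), 0 < l →
      K (x, l • y, (l ^ 2) • z + ρ • y) = l * K (x, y, z))
    (hKcont : Continuous K)
    (hKsmooth : ContDiffOn ℝ (⊤ : ℕ∞) K
      {p : EuclideanSpace ℝ (Fin n) × EuclideanSpace ℝ (Fin n) × EuclideanSpace ℝ (Fin n) |
        p.2.1 ≠ 0})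
    (u : EuclideanSpace ℝ (Fin n) → EuclideanSpace ℝ (Fin n)) (hu : ContDiff ℝ 2 u)
    (hinv : ∀ (x y z : EuclideanSpace ℝ (Fin n)), y ≠ 0 →
      fderiv ℝ (fun x' => K (x', y, z)) x (u x)
        + fderiv ℝ (fun y' => K (x, y', z)) y (fderiv ℝ u x y)
        + fderiv ℝ (fun z' => K (x, y, z')) z
            ((fderiv ℝ (fun x' => fderiv ℝ u x') x) y y + fderiv ℝ u x z) = 0)
    (t₁ t₂ : ℝ) (σ : ℝ → EuclideanSpace ℝ (Fin n)) (hσ : ContDiff ℝ (⊤ : ℕ∞) σ)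
    (hreg : ∀ t ∈ Set.Icc t₁ t₂, deriv σ t ≠ 0)
    (hEL : ∀ t ∈ Set.Icc t₁ t₂, ∀ h : EuclideanSpace ℝ (Fin n), eulerLagrange₂ n K σ t h = 0) :
    ∀ t ∈ Set.Icc t₁ t₂, ∀ t' ∈ Set.Icc t₁ t₂,
      (fderiv ℝ (fun y => K (σ t, y, deriv (deriv σ) t)) (deriv σ t) (u (σ t))
        + 2 * fderiv ℝ (fun z => K (σ t, deriv σ t, z)) (deriv (deriv σ) t)
            (fderiv ℝ u (σ t) (deriv σ t))
        - deriv (fun s =>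
            fderiv ℝ (fun z => K (σ s, deriv σ s, z)) (deriv (deriv σ) s) (u (σ s))) t) =
      (fderiv ℝ (fun y => K (σ t', y, deriv (deriv σ) t')) (deriv σ t') (u (σ t'))
        + 2 * fderiv ℝ (fun z => K (σ t', deriv σ t', z)) (deriv (deriv σ) t')
            (fderiv ℝ u (σ t') (deriv σ t'))
        - deriv (fun s =>
            fderiv ℝ (fun z => K (σ s, deriv σ s, z)) (deriv (deriv σ) s) (u (σ s))) t') := by
  have hI : IsOpen {t : ℝ | deriv σ t ≠ 0} :=
    isOpen_ne_fun (hσ.continuous_deriv (by simp)) continuous_const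
  have hσ1 : ContDiff ℝ (⊤ : ℕ∞) (deriv σ) := by
    have := (contDiff_infty_iff_deriv (𝕜 := ℝ) (f := σ)).1 hσ
    exact this.2
  have hσ2 : ContDiff ℝ (⊤ : ℕ∞) (deriv (deriv σ)) := by
    have := (contDiff_infty_iff_deriv (𝕜 := ℝ) (f := deriv σ)).1 hσ1
    exact this.2
  set P := fun s => fderiv ℝ (fun z => K (σ s, deriv σ s, z)) (deriv (deriv σ) s) with hP
  set Q := fun s => fderiv ℝ (fun y => K (σ s, y, deriv (deriv σ) s)) (deriv σ s) with hQ
  have hG : ∀ t, deriv σ t ≠ 0 → ContDiffAt ℝ (⊤ : ℕ∞)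
      (fun s => fderiv ℝ K (σ s, deriv σ s, deriv (deriv σ) s)) t := fun t ht =>
    ContDiffAt.comp t (g := fderiv ℝ K) (f := fun s => (σ s, deriv σ s, deriv (deriv σ) s))
      (nso_d hKsmooth ht)
      (hσ.contDiffAt.prodMk (hσ1.contDiffAt.prodMk hσ2.contDiffAt))
  have hPs : ∀ t, deriv σ t ≠ 0 → ContDiffAt ℝ (⊤ : ℕ∞) P t := by
    intro t ht
    refine ((hG t ht).clm_comp (contDiffAt_const 
      (c := (0 : EuclideanSpace ℝ (Fin n) →L[ℝ] EuclideanSpace ℝ (Fin n)).prod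
        ((0 : EuclideanSpace ℝ (Fin n) →L[ℝ] EuclideanSpace ℝ (Fin n)).prod (ContinuousLinearMap.id ℝ (EuclideanSpace ℝ (Fin n))))))).congr_of_eventuallyEq ?_
    · filter_upwards [hI.mem_nhds ht] with s hs
      exact nso_z hKsmooth hs
  have hQs : ∀ t, deriv σ t ≠ 0 → ContDiffAt ℝ (⊤ : ℕ∞) Q t := by
    intro t ht
    refine ((hG t ht).clm_comp (contDiffAt_const 
      (c := (0 : EuclideanSpace ℝ (Fin n) →L[ℝ] EuclideanSpace ℝ (Fin n)).prod
        ((ContinuousLinearMap.id ℝ (EuclideanSpace ℝ (Fin n))).prod (0 : EuclideanSpace ℝ (Fin n) →L[ℝ] EuclideanSpace ℝ (Fin n)))))).congr_of_eventuallyEq ?_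
    · filter_upwards [hI.mem_nhds ht] with s hs
      exact nso_y hKsmooth hs
  have hP1 : ∀ t, deriv σ t ≠ 0 → HasDerivAt P (deriv P t) t := fun t ht =>
    ((hPs t ht).differentiableAt (by simp)).hasDerivAt
  have hQ1 : ∀ t, deriv σ t ≠ 0 → HasDerivAt Q (deriv Q t) t := fun t ht =>
    ((hQs t ht).differentiableAt (by simp)).hasDerivAt
  have hP2 : ∀ t, deriv σ t ≠ 0 → HasDerivAt (deriv P) (deriv (deriv P) t) t := by
    intro t ht
    have h1 : ContDiffAt ℝ (⊤ : ℕ∞) (fderiv ℝ P) t := (hPs t ht).fderiv_right (by simp)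
    have h2 : DifferentiableAt ℝ (fun s => fderiv ℝ P s 1) t :=
      (h1.differentiableAt (by simp)).clm_apply (differentiableAt_const _)
    exact DifferentiableAt.hasDerivAt h2
  have hs0 : ∀ t, HasDerivAt σ (deriv σ t) t := fun t =>
    (hσ.differentiable (by simp) t).hasDerivAt
  have hs1 : ∀ t, HasDerivAt (deriv σ) (deriv (deriv σ) t) t := fun t =>
    (hσ1.differentiable (by simp) t).hasDerivAt
  have hU : ∀ t, HasDerivAt (fun s => u (σ s)) (fderiv ℝ u (σ t) (deriv σ t)) t := fun t =>
    ((hu.differentiable (by simp) (σ t)).hasFDerivAt).comp_hasDerivAt t (hs0 t)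
  have hV : ∀ t, HasDerivAt (fun s => fderiv ℝ u (σ s) (deriv σ s))
      ((fderiv ℝ (fun x' => fderiv ℝ u x') (σ t)) (deriv σ t) (deriv σ t)
        + fderiv ℝ u (σ t) (deriv (deriv σ) t)) t := by
    intro t
    have h1 : ContDiff ℝ 1 (fderiv ℝ u) := hu.fderiv_right (by norm_num)
    have h2 := ((h1.differentiable (by simp) (σ t)).hasFDerivAt).comp_hasDerivAt t (hs0 t)
    exact h2.clm_apply (hs1 t)
  have hPU : ∀ t, deriv σ t ≠ 0 → HasDerivAt (fun s => P s (u (σ s)))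
      (deriv P t (u (σ t)) + P t (fderiv ℝ u (σ t) (deriv σ t))) t := fun t ht =>
    (hP1 t ht).clm_apply (hU t)
  have key : ∀ t ∈ Set.Icc t₁ t₂, HasDerivAt (fun t => Q t (u (σ t))
      + 2 * P t (fderiv ℝ u (σ t) (deriv σ t)) - deriv (fun s => P s (u (σ s))) t) 0 t := by
    intro t htI
    have ht := hreg t htI
    have a1 := (hQ1 t ht).clm_apply (hU t)
    have a2 := (hP1 t ht).clm_apply (hV t)
    have a3 := (hP2 t ht).clm_apply (hU t)
    have a4 := ((a1.add (a2.const_mul 2)).sub (a3.add a2))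
    have el := hEL t htI (u (σ t))
    unfold eulerLagrange₂ at el
    rw [← nso_dx hhom hKsmooth ht] at el
    have e1 : deriv (fun s => Q s (u (σ t))) t = deriv Q t (u (σ t)) := by
      simpa using ((hQ1 t ht).clm_apply (hasDerivAt_const t (u (σ t)))).deriv
    have e2 : deriv (deriv (fun s => P s (u (σ t)))) t = deriv (deriv P) t (u (σ t)) := by
      have : deriv (fun s => P s (u (σ t))) =ᶠ[nhds t] fun s => deriv P s (u (σ t)) := by
        filter_upwards [hI.mem_nhds ht] with s hs
        simpa using ((hP1 s hs).clm_apply (hasDerivAt_const s (u (σ t)))).deriv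
      rw [this.deriv_eq]
      simpa using ((hP2 t ht).clm_apply (hasDerivAt_const t (u (σ t)))).deriv
    have iv := hinv (σ t) (deriv σ t) (deriv (deriv σ) t) ht
    change _ - deriv (fun s => Q s (u (σ t))) t + deriv (deriv (fun s => P s (u (σ t)))) t = 0 at el
    rw [e1, e2] at el
    change _ + Q t _ + P t _ = 0 at iv
    refine (a4.congr_of_eventuallyEq ?_).congr_deriv ?_
    · filter_upwards [hI.mem_nhds ht] with s hs
      simp only [(hPU s hs).deriv, Pi.add_apply, Pi.sub_apply]
    · linarith
  have hc := constant_of_has_deriv_right_zero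
    (fun t ht => (key t ht).continuousAt.continuousWithinAt)
    (fun t ht => (key t (Set.Ico_subset_Icc_self ht)).hasDerivWithinAt)
  intro t ht t' ht'
  exact (hc t ht).trans (hc t' ht').symm
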